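/- arXiv:1905.04940 — 2 statements merged into one kernel-verified Lean document; each statement's English description precedes it below -/
import Mathlib

section
/- Let p be an odd prime, q = p^m, α a primitive element of F_q, and T = (q−1)/(p−1). Let w = (a_0, …, a_{k−1}) ∈ F_q^k be a nonzero vector with R(w) = m − 1. Let r be a positive divisor of p − 1 with gcd(r, m) = 1, set n' = (q−1)/r, let d be an integer with gcd(d, q−1) = 1, and let ψ be an F_p-linear bijection of F_q. Define r sequences S^i = (s^i_t)_{t=0}^{n'−1}, 0 ≤ i ≤ r−1, by s^i_t = 𝒯(ψ(α^{d(i+rt)})). Then 𝓢 = {S^0, …, S^{r−1}} is a family of r sequences of length n' whose entries take exactly p^{m−1} distinct values, and for every window length L with 1 ≤ L ≤ n', the maximum partial Hamming correlation satisfies M(𝓢; L) = ⌈L/T⌉. -/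
/-!
Put `β = α ^ d`, again a primitive element, and let `φ = 𝒯 ∘ ψ`, so that
`s i t = φ (β ^ (i + r t))`. Since the trace form is nondegenerate, `ker 𝒯` is the orthogonal
complement of the span of `w`, hence `ker φ` is a line `𝔽_p κ` (`finrank_ker_trace_comp`).

For `(i, 0) ≠ (j, τ)` the scalar `c = 1 - β ^ (j - i + r τ)` is nonzero, and
`s i t = s j (t + τ)` says that `β ^ (i + r t) * c` lies on the line `𝔽_p κ`. As
`𝔽_p^× = ⟨β ^ T⟩`, this is a congruence `i + r t ≡ e [ZMOD T]`, and because
`T = 1 + p + ⋯ + p ^ (m - 1) ≡ m [ZMOD r]` is coprime to `r`, it is a single residue class of `t`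
modulo `T` (`coincidence_iff`). A window of length `L` meets a residue class modulo `T` at most
`⌈L / T⌉` times, with equality when the window starts in the class.

The number of values is the cardinality of the range of `φ`, since the nontrivial kernel makes the
value at `0` also a value at a nonzero element.
-/

/-- Partial Hamming correlation of the length-`N` (cyclically indexed) sequences
`x` and `y`, over a window of length `L` starting at `l`, with shift `τ`. -/
noncomputable def Hcorr {A : Type*} (N L l τ : ℕ) (x y : ℕ → A) : ℕ :=
  Nat.card {t : ℕ | l ≤ t ∧ t < l + L ∧ x (t % N) = y ((t + τ) % N)}

section Windows

/-- A window of length `L` contains at most `⌈L / T⌉` members of a residue class modulo `T`. -/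
lemma card_window_le {T : ℕ} (hT : 0 < T) (t₀ : ℤ) (l L : ℕ) (hL : 1 ≤ L) :
    Nat.card {t : ℕ | l ≤ t ∧ t < l + L ∧ (t : ℤ) ≡ t₀ [ZMOD T]} ≤ (L + T - 1) / T := by
  rw [Nat.card_coe_set_eq]
  have h := Set.ncard_le_ncard_of_injOn (s := {t : ℕ | l ≤ t ∧ t < l + L ∧ (t : ℤ) ≡ t₀ [ZMOD T]})
    (t := (↑(Finset.range ((L + T - 1) / T)) : Set ℕ)) (fun t => (t - l) / T)
    (by
      rintro t ⟨h1, h2, -⟩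
      simp only [Finset.coe_range, Set.mem_Iio]
      have : (t - l) / T ≤ (L - 1) / T := Nat.div_le_div_right (by omega)
      have h3 : (L + T - 1) / T = (L - 1) / T + 1 := by
        rw [← Nat.add_div_right _ hT]; congr 1; omega
      omega)
    (by
      rintro t ⟨h1, -, h2⟩ u ⟨h3, -, h4⟩ h5
      have h6 : (t : ℤ) ≡ u [ZMOD T] := h2.trans h4.symm
      have h7 : t ≡ u [MOD T] := (Int.natCast_modEq_iff).1 h6
      have h8 : (t - l) ≡ (u - l) [MOD T] := by
        apply Nat.ModEq.add_right_cancel' l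
        rwa [Nat.sub_add_cancel h1, Nat.sub_add_cancel h3]
      have h9 : t - l = u - l := by
        rw [← Nat.div_add_mod (t - l) T, ← Nat.div_add_mod (u - l) T]
        simp only at h5
        rw [h5, h8]
      omega)
    (Finset.finite_toSet _)
  rwa [Set.ncard_coe_finset, Finset.card_range] at h

/-- The bound of `card_window_le` is attained by a window starting in the residue class. -/
lemma card_window_eq {T : ℕ} (hT : 0 < T) (t₀ : ℤ) (l L : ℕ) (hL : 1 ≤ L)
    (hl : (l : ℤ) ≡ t₀ [ZMOD T]) :
    Nat.card {t : ℕ | l ≤ t ∧ t < l + L ∧ (t : ℤ) ≡ t₀ [ZMOD T]} = (L + T - 1) / T := by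
  refine le_antisymm (card_window_le hT t₀ l L hL) ?_
  rw [Nat.card_coe_set_eq]
  have h := Set.ncard_le_ncard_of_injOn (s := (↑(Finset.range ((L + T - 1) / T)) : Set ℕ))
    (t := {t : ℕ | l ≤ t ∧ t < l + L ∧ (t : ℤ) ≡ t₀ [ZMOD T]}) (fun j => l + T * j)
    (by
      intro j hj
      simp only [Finset.coe_range, Set.mem_Iio] at hj
      have h3 : (L + T - 1) / T = (L - 1) / T + 1 := by
        rw [← Nat.add_div_right _ hT]; congr 1; omega
      have h4 : j ≤ (L - 1) / T := by omega
      have h5 : j * T ≤ L - 1 := (Nat.le_div_iff_mul_le hT).1 h4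
      refine ⟨by simp, ?_, ?_⟩
      · show l + T * j < l + L
        rw [mul_comm]; omega
      · refine Int.ModEq.trans ?_ hl
        push_cast
        exact (Int.modEq_iff_dvd.2 ⟨-j, by ring⟩))
    (by
      intro i _ j _ hij
      simpa [hT.ne'] using hij)
    ((Set.finite_lt_nat (l + L)).subset fun t ht => ht.2.1)
  rwa [Set.ncard_coe_finset, Finset.card_range] at h

end Windows

section FiniteFields

/-- `T = 1 + p + ⋯ + p ^ (m - 1)` is congruent to `m` modulo every divisor of `p - 1`. -/
lemma coprime_repunit {p m r T : ℕ} (hp : 2 ≤ p) (hT : T = (p ^ m - 1) / (p - 1))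
    (hrp : r ∣ p - 1) (hrm : r.Coprime m) : r.Coprime T := by
  have h1 : 1 ≡ p [MOD r] := (Nat.modEq_iff_dvd' (by omega)).2 hrp
  have h2 : T ≡ m [MOD r] := by
    rw [hT, ← Nat.geomSum_eq hp]
    have : ∑ k ∈ Finset.range m, p ^ k ≡ ∑ k ∈ Finset.range m, 1 [MOD r] := by
      apply Nat.ModEq.sum
      intro i _
      simpa using (h1.symm.pow i)
    simpa using this
  have := h2.gcd_eq
  rw [Nat.coprime_comm, Nat.Coprime, this]
  exact hrm.symm

variable {p m : ℕ} {F : Type*} [Field F]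

lemma isPrimitiveRoot_of_generates [Fintype F] (α : F) (hα0 : α ≠ 0)
    (hα : ∀ x : F, x ≠ 0 → ∃ s : ℕ, α ^ s = x) (hcard : Fintype.card F = p ^ m) :
    IsPrimitiveRoot α (p ^ m - 1) := by
  classical
  have h : orderOf (Units.mk0 α hα0) = p ^ m - 1 := by
    rw [orderOf_eq_card_of_forall_mem_zpowers, Nat.card_eq_fintype_card, Fintype.card_units, hcard]
    intro x
    obtain ⟨s, hs⟩ := hα x x.ne_zero
    exact ⟨s, by ext; simpa using hs⟩
  have h2 := IsPrimitiveRoot.coe_units_iff.2 (IsPrimitiveRoot.orderOf (Units.mk0 α hα0))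
  rwa [h] at h2

variable [Fact p.Prime] [Algebra (ZMod p) F]

/-- The powers of a primitive element lying in the prime field are those with exponent divisible
by `T = (p ^ m - 1) / (p - 1)`. -/
lemma zpow_mem_prime_iff {T : ℕ} (hT : T * (p - 1) = p ^ m - 1) {β : F} (hβ0 : β ≠ 0)
    (hβ : IsPrimitiveRoot β (p ^ m - 1)) (e : ℤ) :
    (∃ a : ZMod p, algebraMap (ZMod p) F a = β ^ e) ↔ (T : ℤ) ∣ e := by
  have : CharP F p := charP_of_injective_algebraMap (algebraMap (ZMod p) F).injective p
  have hp := (Fact.out : p.Prime).two_le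
  have h1 : (∃ a : ZMod p, algebraMap (ZMod p) F a = β ^ e) ↔ (β ^ e) ^ p = β ^ e := by
    rw [← Subfield.mem_bot_iff_pow_eq_self, Subfield.bot_eq_of_zMod_algebra p]
    rfl
  rw [h1]
  have h2 : (β ^ e) ^ p = β ^ (e * (p - 1 : ℕ)) * β ^ e := by
    rw [← zpow_natCast, ← zpow_mul, ← zpow_add₀ hβ0]
    congr 1
    push_cast [show 1 ≤ p by omega]
    ring
  rw [h2, mul_eq_right₀ (zpow_ne_zero e hβ0), hβ.zpow_eq_one_iff_dvd, ← hT]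
  push_cast
  exact mul_dvd_mul_iff_right (by
    have : 0 < p - 1 := by omega
    exact_mod_cast this.ne')

variable [Fintype F]

/-- The kernel of `φ = 𝒯 ∘ ψ` is a line: `ker 𝒯` is the orthogonal complement of the span of `w`
under the trace form, and `ψ` is bijective. -/
lemma finrank_ker_trace_comp {k : ℕ} (hm : 2 ≤ m) (hF : Module.finrank (ZMod p) F = m)
    (w : Fin k → F)
    (hR : Module.finrank (ZMod p) (Submodule.span (ZMod p) (Set.range w)) = m - 1)
    (φ : F →ₗ[ZMod p] (Fin k → ZMod p)) (ψ : F ≃ₗ[ZMod p] F)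
    (hφ : ∀ x i, φ x i = Algebra.trace (ZMod p) F (w i * ψ x)) :
    Module.finrank (ZMod p) φ.ker = 1 := by
  have h1 := LinearMap.BilinForm.finrank_orthogonal (traceForm_nondegenerate (ZMod p) F)
    (Submodule.span (ZMod p) (Set.range w))
  rw [hR, hF] at h1
  have h2 : φ.ker = ((Algebra.traceForm (ZMod p) F).orthogonal
      (Submodule.span (ZMod p) (Set.range w))).comap ψ.toLinearMap := by
    ext x
    rw [LinearMap.mem_ker, Submodule.mem_comap, LinearMap.BilinForm.mem_orthogonal_iff]
    constructor
    · intro hx n hn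
      induction hn using Submodule.span_induction with
      | mem y hy =>
        obtain ⟨i, rfl⟩ := hy
        have := congrFun hx i
        rw [hφ] at this
        simpa [Algebra.traceForm_apply] using this
      | zero => simp
      | add y z _ _ hy hz => rw [map_add, LinearMap.add_apply, hy, hz, add_zero]
      | smul a y _ hy => rw [map_smul, LinearMap.smul_apply, hy, smul_zero]
    · intro h
      ext i
      rw [hφ]
      simpa [Algebra.traceForm_apply] using h (w i) (Submodule.subset_span ⟨i, rfl⟩)
  have h3 := LinearEquiv.finrank_map_eq ψ.symm ((Algebra.traceForm (ZMod p) F).orthogonal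
      (Submodule.span (ZMod p) (Set.range w)))
  have h4 := Submodule.map_equiv_eq_comap_symm ψ.symm ((Algebra.traceForm (ZMod p) F).orthogonal
      (Submodule.span (ZMod p) (Set.range w)))
  rw [LinearEquiv.symm_symm] at h4
  rw [h2, ← h4]
  refine h3.trans ?_
  rw [h1]
  omega

/-- Multiplying by a nonzero `c`, the exponents `i + r t` that land on the line `ker φ` form one
residue class of `t` modulo `T`. -/
lemma coincidence_iff {V : Type*} [AddCommGroup V] [Module (ZMod p) V]
    {T r : ℕ} (hT : T * (p - 1) = p ^ m - 1) (hrT : r.Coprime T)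
    (hcard : Fintype.card F = p ^ m) {β : F} (hβ0 : β ≠ 0)
    (hβ : IsPrimitiveRoot β (p ^ m - 1)) (φ : F →ₗ[ZMod p] V)
    (hφ : Module.finrank (ZMod p) φ.ker = 1) (c : F) (hc : c ≠ 0) (i : ℤ) :
    ∃ t₀ : ℤ, ∀ t : ℤ, φ (β ^ (i + r * t) * c) = 0 ↔ t ≡ t₀ [ZMOD T] := by
  obtain ⟨⟨κ, hκ⟩, hκ0, hspan⟩ := finrank_eq_one_iff'.1 hφ
  have hκ0 : κ ≠ 0 := fun h => hκ0 (Subtype.ext h)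
  have hker : ∀ x, φ x = 0 ↔ ∃ a : ZMod p, algebraMap (ZMod p) F a * κ = x := by
    intro x
    constructor
    · intro hx
      obtain ⟨a, ha⟩ := hspan ⟨x, hx⟩
      refine ⟨a, ?_⟩
      rw [← Algebra.smul_def]
      exact congrArg Subtype.val ha
    · rintro ⟨a, rfl⟩
      rw [← Algebra.smul_def, map_smul, LinearMap.mem_ker.1 hκ, smul_zero]
  have : NeZero (p ^ m - 1) := ⟨by
    have := Fintype.one_lt_card (α := F); omega⟩
  obtain ⟨e, -, he⟩ := hβ.eq_pow_of_pow_eq_one (ξ := κ / c) (by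
    rw [← hcard]; exact FiniteField.pow_card_sub_one_eq_one _ (div_ne_zero hκ0 hc))
  obtain ⟨y, hy⟩ := Int.mod_coprime hrT
  refine ⟨(e - i) * y, fun t => ?_⟩
  have h1 : φ (β ^ (i + r * t) * c) = 0 ↔
      ∃ a : ZMod p, algebraMap (ZMod p) F a = β ^ (i + r * t - e) := by
    rw [hker]
    refine exists_congr fun a => ?_
    rw [zpow_sub₀ hβ0, zpow_natCast, he, eq_div_iff (div_ne_zero hκ0 hc), mul_div_assoc',
      div_eq_iff hc]
  rw [h1, zpow_mem_prime_iff hT hβ0 hβ]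
  have h2 : (T : ℤ) ∣ i + r * t - e ↔ r * t ≡ e - i [ZMOD T] := by
    rw [Int.modEq_comm, Int.modEq_iff_dvd]
    ring_nf
  rw [h2]
  constructor
  · intro h
    calc t = 1 * t := by ring
      _ ≡ (r * y) * t [ZMOD T] := (hy.symm.mul_right t)
      _ = (r * t) * y := by ring
      _ ≡ (e - i) * y [ZMOD T] := h.mul_right y
  · intro h
    calc (r * t : ℤ) ≡ r * ((e - i) * y) [ZMOD T] := h.mul_left r
      _ = (r * y) * (e - i) := by ring
      _ ≡ 1 * (e - i) [ZMOD T] := hy.mul_right _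
      _ = e - i := by ring

/-- Every value of `φ`, including the value `0`, is a value at a nonzero element. -/
lemma card_values {V : Type*} [AddCommGroup V] [Module (ZMod p) V]
    (hF : Module.finrank (ZMod p) F = m) (φ : F →ₗ[ZMod p] V)
    (hφ : Module.finrank (ZMod p) φ.ker = 1) :
    Nat.card {v : V | ∃ x : F, x ≠ 0 ∧ φ x = v} = p ^ (m - 1) := by
  obtain ⟨⟨κ, hκ⟩, hκ0, -⟩ := finrank_eq_one_iff'.1 hφ
  have hκ0 : κ ≠ 0 := fun h => hκ0 (Subtype.ext h)
  have h1 : {v : V | ∃ x : F, x ≠ 0 ∧ φ x = v} = (φ.range : Set V) := by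
    ext v
    constructor
    · rintro ⟨x, -, rfl⟩; exact ⟨x, rfl⟩
    · rintro ⟨x, rfl⟩
      by_cases hx : x = 0
      · exact ⟨κ, hκ0, by rw [hx, map_zero]; exact hκ⟩
      · exact ⟨x, hx, rfl⟩
  rw [h1]
  have h2 := LinearMap.finrank_range_add_finrank_ker φ
  rw [hφ, hF] at h2
  have h3 : Module.finrank (ZMod p) φ.range = m - 1 := by omega
  have h4 := Module.natCard_eq_pow_finrank (K := ZMod p) (V := φ.range)
  rw [h3, Nat.card_zmod] at h4
  exact h4

end FiniteFields

theorem stmt10 (p m k : ℕ) (hp : p.Prime) (hpodd : Odd p) (hm : 0 < m)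
    (hk : 0 < k)
    {F : Type*} [Field F] [Fintype F] [Algebra (ZMod p) F]
    (hcard : Fintype.card F = p ^ m)
    -- α is a primitive element of F
    (α : F) (hα0 : α ≠ 0) (hα : ∀ x : F, x ≠ 0 → ∃ s : ℕ, α ^ s = x)
    (T : ℕ) (hT : T = (p ^ m - 1) / (p - 1))
    (w : Fin k → F) (hw : w ≠ 0)
    (hR : Module.finrank (ZMod p) (Submodule.span (ZMod p) (Set.range w)) = m - 1)
    (r : ℕ) (hr : 0 < r) (hrp : r ∣ p - 1) (hrm : Nat.Coprime r m)
    (n' : ℕ) (hn' : n' = (p ^ m - 1) / r)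
    (d : ℤ) (hd : Int.gcd d ((p : ℤ) ^ m - 1) = 1)
    -- ψ is an F_p-linear bijection of F
    (ψ : F → F) (hψlin : IsLinearMap (ZMod p) ψ) (hψbij : Function.Bijective ψ)
    -- the family of r sequences s^i_t = 𝒯(ψ(α^{d(i+rt)}))
    (s : ℕ → ℕ → (Fin k → ZMod p))
    (hs : ∀ (i t : ℕ) (idx : Fin k),
      s i t idx = Algebra.trace (ZMod p) F (w idx * ψ (α ^ (d * ((i : ℤ) + r * t))))) :
    -- the r sequences of length n' are pairwise distinct
    (∀ i < r, ∀ j < r, (∀ t < n', s i t = s j t) → i = j) ∧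
    -- their entries take exactly p^(m-1) distinct values
    Nat.card {v : Fin k → ZMod p | ∃ i < r, ∃ t < n', s i t = v} = p ^ (m - 1) ∧
    -- and the maximum partial Hamming correlation equals ⌈L/T⌉
    (∀ L : ℕ, 1 ≤ L → L ≤ n' →
      (∀ i < r, ∀ j < r, ∀ l < n', ∀ τ < n', ¬(i = j ∧ τ = 0) →
        Hcorr n' L l τ (s i) (s j) ≤ (L + T - 1) / T) ∧
      (∃ i < r, ∃ j < r, ∃ l < n', ∃ τ < n', ¬(i = j ∧ τ = 0) ∧
        Hcorr n' L l τ (s i) (s j) = (L + T - 1) / T)) := by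
  have : Fact p.Prime := ⟨hp⟩
  have hp3 : 3 ≤ p := by
    have := hp.two_le
    obtain ⟨x, hx⟩ := hpodd
    omega
  have hF : Module.finrank (ZMod p) F = m := by
    have h := Module.card_eq_pow_finrank (K := ZMod p) (V := F)
    rw [hcard, ZMod.card] at h
    exact (Nat.pow_right_injective hp.two_le h).symm
  -- for `m = 1` the span of `w` would be trivial
  have hm2 : 2 ≤ m := by
    by_contra hlt
    have h0 : Module.finrank (ZMod p) (Submodule.span (ZMod p) (Set.range w)) = 0 := by
      rw [hR]; omega
    rw [Submodule.finrank_eq_zero, Submodule.span_eq_bot] at h0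
    exact hw (funext fun i => h0 _ ⟨i, rfl⟩)
  have hpm : p ≤ p ^ m := Nat.le_self_pow (by omega) p
  have hTN : T * (p - 1) = p ^ m - 1 := by
    rw [hT]
    exact Nat.div_mul_cancel (by simpa using Nat.sub_dvd_pow_sub_pow p 1 m)
  have hrN : r * n' = p ^ m - 1 := by
    rw [hn']
    exact Nat.mul_div_cancel' (hrp.trans (Dvd.intro_left T hTN))
  have hTpos : 0 < T := by
    rcases Nat.eq_zero_or_pos T with h | h
    · rw [h] at hTN; omega
    · exact h
  have hT2 : 2 ≤ T := by
    by_contra hlt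
    have h1 : T = 1 := by omega
    rw [h1, one_mul] at hTN
    have : p ^ 1 < p ^ m := Nat.pow_lt_pow_right hp.one_lt (by omega)
    rw [pow_one] at this
    omega
  have hTn : T ≤ n' := by
    have h1 : r ≤ p - 1 := Nat.le_of_dvd (by omega) hrp
    have h2 : r * T ≤ r * n' := by
      rw [hrN, ← hTN, mul_comm]; exact Nat.mul_le_mul_left T h1
    exact Nat.le_of_mul_le_mul_left h2 hr
  have hrT : r.Coprime T := coprime_repunit hp.two_le hT hrp hrm
  have hcast : ((p ^ m - 1 : ℕ) : ℤ) = (p : ℤ) ^ m - 1 := by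
    push_cast [Nat.one_le_pow m p hp.pos]; ring
  have hβ : IsPrimitiveRoot (α ^ d) (p ^ m - 1) :=
    (isPrimitiveRoot_of_generates α hα0 hα hcard).zpow_of_gcd_eq_one d (by rw [hcast]; exact hd)
  have hβ0 : α ^ d ≠ 0 := zpow_ne_zero d hα0
  generalize hβdef : α ^ d = β at hβ hβ0
  let ψ' : F ≃ₗ[ZMod p] F := LinearEquiv.ofBijective (hψlin.mk' ψ) hψbij
  let φ : F →ₗ[ZMod p] (Fin k → ZMod p) :=
    (LinearMap.pi fun i => Algebra.traceForm (ZMod p) F (w i)) ∘ₗ ψ'.toLinearMap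
  have hφ : ∀ x i, φ x i = Algebra.trace (ZMod p) F (w i * ψ' x) := fun x i => rfl
  have hker := finrank_ker_trace_comp hm2 hF w hR φ ψ' hφ
  have hsφ : ∀ i t : ℕ, s i t = φ (β ^ ((i : ℤ) + r * t)) := by
    intro i t
    ext idx
    rw [hs, hφ, ← hβdef, ← zpow_mul]
    rfl
  clear_value φ
  have hper : ∀ i t : ℕ, s i (t % n') = φ (β ^ ((i : ℤ) + r * t)) := by
    intro i t
    rw [hsφ]
    congr 1
    have h1 : (i : ℤ) + r * t = (i + r * (t % n' : ℕ)) + (p ^ m - 1 : ℕ) * (t / n' : ℕ) := by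
      rw [← hrN]
      nth_rewrite 1 [← Nat.mod_add_div t n']
      push_cast
      ring
    rw [h1, zpow_add₀ hβ0 (_ + _), (hβ.zpow_eq_one_iff_dvd _).2 (Dvd.intro _ rfl), mul_one]
  have key : ∀ i < r, ∀ j < r, ∀ τ < n', ¬(i = j ∧ τ = 0) → ∃ t₀ : ℤ, ∀ t : ℕ,
      s i (t % n') = s j ((t + τ) % n') ↔ (t : ℤ) ≡ t₀ [ZMOD T] := by
    intro i hi j hj τ hτ hne
    have hc : 1 - β ^ ((j : ℤ) - i + r * τ) ≠ 0 := by
      intro h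
      have h1 := (hβ.zpow_eq_one_iff_dvd _).1 (sub_eq_zero.1 h).symm
      rw [← hrN] at h1
      push_cast at h1
      have h2 : (r : ℤ) ∣ (j : ℤ) - i :=
        (Int.dvd_add_left (Dvd.intro _ rfl)).1 ((Dvd.intro _ rfl).trans h1)
      have h3 : (j : ℤ) - i = 0 := Int.eq_zero_of_abs_lt_dvd h2 (by rw [abs_lt]; omega)
      rw [h3, zero_add] at h1
      have h4 : (n' : ℤ) ∣ τ :=
        (mul_dvd_mul_iff_left (by exact_mod_cast hr.ne')).1 h1
      have h5 : τ = 0 := Nat.eq_zero_of_dvd_of_lt (by exact_mod_cast h4) hτ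
      exact hne ⟨by omega, h5⟩
    obtain ⟨t₀, ht₀⟩ := coincidence_iff hTN hrT hcard hβ0 hβ φ hker _ hc i
    refine ⟨t₀, fun t => ?_⟩
    rw [← ht₀, hper, hper, ← sub_eq_zero, ← map_sub, mul_sub, mul_one, ← zpow_add₀ hβ0]
    have h6 : (j : ℤ) + r * ((t + τ : ℕ) : ℤ) = i + r * t + (j - i + r * τ) := by
      push_cast; ring
    rw [h6]
  have hH : ∀ (L l τ i j : ℕ) (t₀ : ℤ), (∀ t : ℕ,
      s i (t % n') = s j ((t + τ) % n') ↔ (t : ℤ) ≡ t₀ [ZMOD T]) →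
      Hcorr n' L l τ (s i) (s j)
        = Nat.card {t : ℕ | l ≤ t ∧ t < l + L ∧ (t : ℤ) ≡ t₀ [ZMOD T]} := by
    intro L l τ i j t₀ h
    simp only [Hcorr, h]
  refine ⟨?_, ?_, ?_⟩
  · intro i hi j hj h
    by_contra hij
    obtain ⟨t₀, ht₀⟩ := key i hi j hj 0 (by omega) (fun h => hij h.1)
    -- agreement at `t = 0` and `t = 1` would force `T ∣ 1`
    have h0 := (ht₀ 0).1 (h _ (Nat.mod_lt _ (by omega)))
    have h1 := (ht₀ 1).1 (h _ (Nat.mod_lt _ (by omega)))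
    have h2 := Int.modEq_iff_dvd.1 (h0.trans h1.symm)
    have h3 : T ∣ 1 := by
      rw [← Int.natCast_dvd_natCast]
      simpa only [Nat.cast_zero, Nat.cast_one, sub_zero] using h2
    have := Nat.le_of_dvd one_pos h3
    omega
  · rw [← card_values hF φ hker]
    congr 2
    ext v
    simp only [Set.mem_ofPred_eq]
    constructor
    · rintro ⟨i, -, t, -, rfl⟩
      exact ⟨_, zpow_ne_zero _ hβ0, (hsφ i t).symm⟩
    · rintro ⟨x, hx, rfl⟩
      have : NeZero (p ^ m - 1) := ⟨by omega⟩
      obtain ⟨e, he, rfl⟩ := hβ.eq_pow_of_pow_eq_one (ξ := x) (by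
        rw [← hcard]; exact FiniteField.pow_card_sub_one_eq_one _ hx)
      refine ⟨e % r, Nat.mod_lt _ hr, e / r, Nat.div_lt_of_lt_mul (by rwa [hrN]), ?_⟩
      rw [hsφ, ← zpow_natCast]
      congr 2
      exact_mod_cast Nat.mod_add_div e r
  · intro L hL hLn
    constructor
    · intro i hi j hj l _ τ hτ hne
      obtain ⟨t₀, ht₀⟩ := key i hi j hj τ hτ hne
      rw [hH L l τ i j t₀ ht₀]
      exact card_window_le hTpos t₀ l L hL
    · have hadm : ∃ i < r, ∃ j < r, ∃ τ < n', ¬(i = j ∧ τ = 0) := by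
        by_cases hr1 : r = 1
        · exact ⟨0, hr, 0, hr, 1, by omega, by simp⟩
        · exact ⟨0, hr, 1, by omega, 0, by omega, by simp⟩
      obtain ⟨i, hi, j, hj, τ, hτ, hne⟩ := hadm
      obtain ⟨t₀, ht₀⟩ := key i hi j hj τ hτ hne
      have hT0 : (0 : ℤ) < T := by exact_mod_cast hTpos
      have hcoe : ((t₀ % T).toNat : ℤ) = t₀ % T := Int.toNat_of_nonneg (Int.emod_nonneg _ hT0.ne')
      refine ⟨i, hi, j, hj, (t₀ % T).toNat, ?_, τ, hτ, hne, ?_⟩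
      · have := Int.emod_lt_of_pos t₀ hT0
        omega
      · rw [hH L _ τ i j t₀ ht₀]
        exact card_window_eq hTpos t₀ _ L hL (by rw [hcoe]; exact Int.mod_modEq _ _)
end

section
/- Let p be an odd prime, q = p^m, θ a primitive element of F_{q^2}, and r an odd positive divisor of q − 1; set n' = (q^2−1)/r. Let w = (a_0, …, a_{k−1}) ∈ F_q^k be a nonzero vector with R(w) = m. Let d be a positive integer with gcd(d, q−1) = 1 and let f : F_{q^2} → F_q be a surjective d-form difference-balanced function. Define s^i_t = 𝒯(f(θ^{i+rt})) for 0 ≤ i ≤ r−1 and 0 ≤ t ≤ n'−1. Then for all i, j ∈ {0, …, r−1}, all τ ∈ {0, …, n'−1} and all l ∈ {0, …, n'−1}, excluding the case (i = j and τ = 0), and for every window length 1 ≤ L ≤ n', the partial Hamming correlation satisfies H_{S^i, S^j}(τ; l | L) ≤ ⌈L/(q+1)⌉. -/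
/-- A set of times lying in one residue class modulo `M` meets a window of length `L` in at most
`⌈L / M⌉` points: `t ↦ (t - l) / M` is injective on it. -/
lemma card_window_le_s15 (M L l : ℕ) (hM : 0 < M) (P : ℕ → Prop)
    (hP : ∀ t₁ t₂, P t₁ → P t₂ → t₁ ≡ t₂ [MOD M]) :
    Nat.card {t : ℕ | l ≤ t ∧ t < l + L ∧ P t} ≤ (L + M - 1) / M := by
  have key : Set.ncard {t : ℕ | l ≤ t ∧ t < l + L ∧ P t} ≤
      Set.ncard (↑(Finset.range ((L + M - 1) / M)) : Set ℕ) := by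
    refine Set.ncard_le_ncard_of_injOn (fun t => (t - l) / M) ?_ ?_ (Finset.finite_toSet _)
    · rintro t ⟨h1, h2, -⟩
      simp only [Finset.coe_range, Set.mem_Iio]
      have h3 : (L + M - 1) / M = (L - 1) / M + 1 := by
        rw [show L + M - 1 = L - 1 + M by omega, Nat.add_div_right _ hM]
      have h4 : (t - l) / M ≤ (L - 1) / M := Nat.div_le_div_right (by omega)
      omega
    · rintro t ⟨h1, -, h3⟩ t' ⟨h1', -, h3'⟩ h
      simp only at h
      have hmod : t - l ≡ t' - l [MOD M] := by
        apply Nat.ModEq.add_right_cancel' l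
        rw [Nat.sub_add_cancel h1, Nat.sub_add_cancel h1']
        exact hP _ _ h3 h3'
      have e1 := Nat.div_add_mod (t - l) M
      have e2 := Nat.div_add_mod (t' - l) M
      rw [h, hmod] at e1
      omega
  rw [Set.ncard_coe_finset, Finset.card_range] at key
  exact key

/-- If `w` spans a field of cardinality `p ^ m` over `ZMod p`, the map
`x ↦ (Tr (w i * x))_i` is injective. -/
lemma eq_of_trace_eq (p m k : ℕ) [Fact p.Prime] {F : Type*} [Field F] [Fintype F]
    [Algebra (ZMod p) F] (hcard : Fintype.card F = p ^ m) (w : Fin k → F)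
    (hR : Module.finrank (ZMod p) (Submodule.span (ZMod p) (Set.range w)) = m) (a b : F)
    (h : ∀ i, Algebra.trace (ZMod p) F (w i * a) = Algebra.trace (ZMod p) F (w i * b)) :
    a = b := by
  have hfin : Module.Finite (ZMod p) F := Module.Finite.of_finite
  have hrank : Module.finrank (ZMod p) F = m := by
    have h1 := Module.card_eq_pow_finrank (K := ZMod p) (V := F)
    rw [hcard, ZMod.card] at h1
    exact (Nat.pow_right_injective (Fact.out : p.Prime).two_le h1).symm
  have htop : Submodule.span (ZMod p) (Set.range w) = ⊤ :=
    Submodule.eq_top_of_finrank_eq (hR.trans hrank.symm)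
  rw [← sub_eq_zero]
  apply (traceForm_nondegenerate (ZMod p) F).2
  intro z
  have hz : z ∈ Submodule.span (ZMod p) (Set.range w) := htop ▸ Submodule.mem_top
  induction hz using Submodule.span_induction with
  | mem x hx =>
    obtain ⟨i, rfl⟩ := hx
    rw [Algebra.traceForm_apply, mul_sub, map_sub, h i, sub_self]
  | zero => simp
  | add x y _ _ hx hy => rw [map_add, LinearMap.add_apply, hx, hy, add_zero]
  | smul c x _ hx => rw [map_smul, LinearMap.smul_apply, hx, smul_zero]

/-- The solution set of `f (δ x) = f x` has `q` elements and contains the `q`-element line through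
any nonzero solution, hence equals that line. -/
lemma exists_smul_of_sol {F F2 : Type*} [Field F] [Fintype F] [Field F2] [Fintype F2]
    [Algebra F F2] (d : ℕ) (f : F2 → F)
    (hform : ∀ (y : F) (x : F2), f (algebraMap F F2 y * x) = y ^ d * f x) (δ : F2)
    (hdb : Nat.card {x : F2 | f (δ * x) - f x = 0} = Fintype.card F) (x₁ x₂ : F2)
    (h0 : x₁ ≠ 0) (h1 : f (δ * x₁) = f x₁) (h2 : f (δ * x₂) = f x₂) :
    ∃ y : F, algebraMap F F2 y * x₁ = x₂ := by
  have hinj : Function.Injective (fun y : F => algebraMap F F2 y * x₁) := fun a b hab =>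
    (algebraMap F F2).injective (mul_right_cancel₀ h0 hab)
  have hsub : Set.range (fun y : F => algebraMap F F2 y * x₁) ⊆
      {x : F2 | f (δ * x) - f x = 0} := by
    rintro _ ⟨y, rfl⟩
    simp only [Set.mem_ofPred_eq]
    rw [mul_left_comm, hform, hform, h1, sub_self]
  have heq := Set.eq_of_subset_of_ncard_le hsub (by
    have e1 : (Set.range (fun y : F => algebraMap F F2 y * x₁)).ncard = Fintype.card F := by
      rw [← Set.image_univ, Set.ncard_image_of_injective _ hinj, Set.ncard_univ,
        Nat.card_eq_fintype_card]
    rw [e1]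
    exact hdb.le) (Set.toFinite _)
  have hx : x₂ ∈ {x : F2 | f (δ * x) - f x = 0} := by simp [h2]
  rw [← heq] at hx
  exact hx

lemma orderOf_eq_of_generates {K : Type*} [Field K] [Fintype K] (θ : K) (hθ0 : θ ≠ 0)
    (hθ : ∀ x : K, x ≠ 0 → ∃ s : ℕ, θ ^ s = x) : orderOf θ = Fintype.card K - 1 := by
  classical
  have h : orderOf (Units.mk0 θ hθ0) = Nat.card Kˣ := by
    apply orderOf_eq_card_of_forall_mem_zpowers
    intro x
    obtain ⟨s, hs⟩ := hθ x x.ne_zero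
    exact ⟨s, by ext; simpa using hs⟩
  rw [← orderOf_units, Units.val_mk0, Nat.card_eq_fintype_card, Fintype.card_units] at h
  exact h

/-- An odd divisor of `q - 1` is coprime to `q + 1`. -/
lemma coprime_of_odd_dvd (q r : ℕ) (hq : 0 < q) (hrodd : Odd r) (hrq : r ∣ q - 1) :
    Nat.Coprime (q + 1) r := by
  have h2 : Nat.gcd (q + 1) r ∣ 2 := by
    have e : 2 = (q + 1) - (q - 1) := by omega
    rw [e]
    exact Nat.dvd_sub (Nat.gcd_dvd_left _ _) ((Nat.gcd_dvd_right _ _).trans hrq)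
  rcases (Nat.dvd_prime Nat.prime_two).1 h2 with h | h
  · exact h
  · have : 2 ∣ r := h ▸ Nat.gcd_dvd_right (q + 1) r
    exact absurd this (by rcases hrodd with ⟨c, rfl⟩; omega)

theorem stmt15 (p m k : ℕ) (hp : p.Prime) (hpodd : Odd p) (hm : 0 < m)
    (hk : 0 < k) (q : ℕ) (hqdef : q = p ^ m)
    {F F2 : Type*} [Field F] [Fintype F] [Algebra (ZMod p) F]
    [Field F2] [Fintype F2] [Algebra F F2]
    (hcard : Fintype.card F = q) (hcard2 : Fintype.card F2 = q ^ 2)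
    -- θ is a primitive element of F2
    (θ : F2) (hθ0 : θ ≠ 0) (hθ : ∀ x : F2, x ≠ 0 → ∃ s : ℕ, θ ^ s = x)
    -- r is an odd positive divisor of q - 1
    (r : ℕ) (hr : 0 < r) (hrodd : Odd r) (hrq : r ∣ q - 1)
    (n' : ℕ) (hn' : n' = (q ^ 2 - 1) / r)
    (w : Fin k → F) (hw : w ≠ 0)
    (hR : Module.finrank (ZMod p) (Submodule.span (ZMod p) (Set.range w)) = m)
    (d : ℕ) (hd : 0 < d) (hdq : Nat.Coprime d (q - 1))
    (f : F2 → F) (hsurj : Function.Surjective f)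
    -- f is a d-form function
    (hform : ∀ (y : F) (x : F2), f (algebraMap F F2 y * x) = y ^ d * f x)
    -- f is difference-balanced
    (hdb : ∀ δ : F2, δ ≠ 0 → δ ≠ 1 → ∀ b : F,
      Nat.card {x : F2 | f (δ * x) - f x = b} = q)
    -- the family of r sequences s^i_t = 𝒯(f(θ^{i+rt}))
    (s : ℕ → ℕ → (Fin k → ZMod p))
    (hs : ∀ (i t : ℕ) (idx : Fin k),
      s i t idx = Algebra.trace (ZMod p) F (w idx * f (θ ^ (i + r * t)))) :
    ∀ i < r, ∀ j < r, ∀ τ < n', ∀ l < n', ¬(i = j ∧ τ = 0) →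
      ∀ L : ℕ, 1 ≤ L → L ≤ n' →
        Hcorr n' L l τ (s i) (s j) ≤ (L + (q + 1) - 1) / (q + 1) := by
  have : Fact p.Prime := ⟨hp⟩
  have hq2 : 1 < q := hqdef ▸ Nat.one_lt_pow hm.ne' hp.one_lt
  have hqq : q ^ 2 - 1 = (q + 1) * (q - 1) := by
    simpa using Nat.sq_sub_sq q 1
  have hord : orderOf θ = q ^ 2 - 1 := by rw [orderOf_eq_of_generates θ hθ0 hθ, hcard2]
  have hpe : ∀ a b : ℕ, θ ^ a = θ ^ b ↔ a ≡ b [MOD q ^ 2 - 1] := by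
    intro a b
    have h := pow_eq_pow_iff_modEq (x := Units.mk0 θ hθ0) (n := a) (m := b)
    rw [← orderOf_units, Units.val_mk0, hord, Units.ext_iff] at h
    simpa using h
  have hrn : r * n' = q ^ 2 - 1 := by
    rw [hn']
    exact Nat.mul_div_cancel' (hqq ▸ hrq.mul_left _)
  have hcop := coprime_of_odd_dvd q r (by omega) hrodd hrq
  intro i hi j hj τ hτ l _ hne L _ _
  -- Reducing the time modulo `n'` is harmless because `θ ^ (r * n') = 1`.
  have hred : ∀ a t : ℕ, θ ^ (a + r * (t % n')) = θ ^ (a + r * t) := by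
    intro a t
    rw [hpe, ← hrn]
    exact ((Nat.mod_modEq t n').mul_left' r).add_left a
  set δ : F2 := θ ^ (j + r * τ) * (θ ^ i)⁻¹ with hδ
  have hi0 : θ ^ i ≠ 0 := pow_ne_zero _ hθ0
  have hδ0 : δ ≠ 0 := mul_ne_zero (pow_ne_zero _ hθ0) (inv_ne_zero hi0)
  have hδ1 : δ ≠ 1 := by
    intro h
    have h1 : θ ^ (j + r * τ) = θ ^ i := by
      rwa [hδ, mul_inv_eq_one₀ hi0] at h
    rw [hpe, ← hrn] at h1
    have h2 : j ≡ i [MOD r] := by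
      have h3 : j + r * τ ≡ i [MOD r] := h1.of_mul_right n'
      have h4 : j + r * τ ≡ j [MOD r] := by simp [Nat.ModEq]
      exact h4.symm.trans h3
    have hji : j = i := Nat.ModEq.eq_of_lt_of_lt h2 hj hi
    subst hji
    have h5 : r * τ ≡ r * 0 [MOD r * n'] := by
      apply Nat.ModEq.add_left_cancel' j
      simpa using h1
    have h6 : τ ≡ 0 [MOD n'] := Nat.ModEq.mul_left_cancel' hr.ne' h5
    exact hne ⟨rfl, Nat.ModEq.eq_of_lt_of_lt h6 hτ (by omega)⟩
  have hsol : ∀ t, s i (t % n') = s j ((t + τ) % n') →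
      f (δ * θ ^ (i + r * t)) = f (θ ^ (i + r * t)) := by
    intro t ht
    have h1 : δ * θ ^ (i + r * t) = θ ^ (j + r * (t + τ)) := by
      rw [hδ, pow_add θ i, mul_assoc, inv_mul_cancel_left₀ hi0, ← pow_add]
      congr 1
      ring
    rw [h1]
    refine (eq_of_trace_eq p m k (hcard.trans hqdef) w hR _ _ fun idx => ?_).symm
    have h2 := congrFun ht idx
    rwa [hs, hs, hred, hred] at h2
  refine card_window_le_s15 (q + 1) L l (by omega) _ fun t₁ t₂ h₁ h₂ => ?_
  obtain ⟨y, hy⟩ := exists_smul_of_sol d f hform δ (by rw [hdb δ hδ0 hδ1 0, hcard])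
    (θ ^ (i + r * t₁)) (θ ^ (i + r * t₂)) (pow_ne_zero _ hθ0) (hsol t₁ h₁) (hsol t₂ h₂)
  have hy0 : y ≠ 0 := by
    rintro rfl
    rw [map_zero, zero_mul] at hy
    exact pow_ne_zero _ hθ0 hy.symm
  -- Raising to the power `q - 1` kills the scalar `y`.
  have hpow := congrArg (· ^ (q - 1)) hy
  simp only [mul_pow] at hpow
  rw [← map_pow, ← hcard, FiniteField.pow_card_sub_one_eq_one y hy0, map_one, one_mul, hcard,
    ← pow_mul, ← pow_mul, hpe, hqq] at hpow
  have h3 : i + r * t₁ ≡ i + r * t₂ [MOD q + 1] :=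
    Nat.ModEq.mul_right_cancel' (by omega) hpow
  exact Nat.ModEq.cancel_left_of_coprime hcop (Nat.ModEq.add_left_cancel' i h3)
end
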